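/- The category IsoSht(F) of iso-Shtukas over the function field F is a semisimple abelian category: every object is isomorphic to a finite direct sum of simple objects. Equivalently, for every iso-Shtuka (V, φ), every F̆-subspace W ⊆ V with φ(W) = W admits an F̆-subspace W' with φ(W') = W' and V = W ⊕ W'. -/

import Mathlib

/-- An additive-type operator on a finite-dimensional stable piece: `T - 1` hits every vector up to
a vector fixed by a `p`-power of `T`. -/
theorem isoSht_fitting {F M : Type*} [Field F] [AddCommGroup M] [Module F M]
    (p : ℕ) [Fact p.Prime] [CharP F p] (T : Module.End F M)
    (U : Submodule F M) [FiniteDimensional F U] (hU : ∀ u ∈ U, T u ∈ U) (v : M) (hv : v ∈ U) :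
    ∃ (y u : M) (r : ℕ), (T ^ p ^ r) u = u ∧ v = u + (T y - y) := by
  set S : Module.End F U := T.restrict hU with hS
  have h1 := (S - 1).eventually_isCompl_ker_pow_range_pow
  obtain ⟨N, hN⟩ := Filter.eventually_atTop.1 h1
  have hp : 1 < p := (Fact.out : p.Prime).one_lt
  have hr : N + 1 ≤ p ^ (N + 1) := (Nat.lt_pow_self hp).le
  have hc := hN (p ^ (N + 1)) (by omega)
  obtain ⟨u, hu, w, hw, huw⟩ : ∃ u ∈ LinearMap.ker ((S - 1) ^ p ^ (N + 1)),
      ∃ w ∈ LinearMap.range ((S - 1) ^ p ^ (N + 1)), u + w = (⟨v, hv⟩ : U) := by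
    have : (⟨v, hv⟩ : U) ∈ LinearMap.ker ((S - 1) ^ p ^ (N + 1)) ⊔
      LinearMap.range ((S - 1) ^ p ^ (N + 1)) := by rw [hc.sup_eq_top]; trivial
    exact Submodule.mem_sup.1 this
  obtain ⟨z, rfl⟩ := hw
  obtain ⟨m, hm⟩ : ∃ m, p ^ (N + 1) = m + 1 := ⟨p ^ (N + 1) - 1, by omega⟩
  refine ⟨(((S - 1) ^ m) z : U), u, N + 1, ?_, ?_⟩
  · have hpow : (S - 1) ^ p ^ (N + 1) = S ^ p ^ (N + 1) - 1 := by
      by_cases hn : Nontrivial U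
      · haveI : CharP (Module.End F U) p := charP_of_injective_algebraMap
          (FaithfulSMul.algebraMap_injective F (Module.End F U)) p
        rw [sub_pow_char_pow_of_commute p (N + 1) (Commute.one_right S), one_pow]
      · rw [not_nontrivial_iff_subsingleton] at hn
        exact Subsingleton.elim _ _
    rw [hpow, LinearMap.mem_ker, LinearMap.sub_apply, sub_eq_zero] at hu
    have := congrArg (Subtype.val) hu
    rw [hS, Module.End.pow_restrict] at this
    simpa using this
  · have := congrArg (Subtype.val) huw
    rw [hm, pow_succ'] at this
    simp [hS] at this
    rw [← this]

/-- Surjectivity of `Φ - 1` for any iso-Shtuka. -/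
theorem isoSht_surj (k kbar F Fbr M : Type*) [Field k] [Fintype k] [Field kbar] [Algebra k kbar]
    [IsAlgClosure k kbar] [Field F] [Algebra k F] [Field Fbr] [Algebra k Fbr] [Algebra F Fbr]
    [Algebra kbar Fbr] [IsScalarTower k F Fbr] [IsScalarTower k kbar Fbr]
    (hgen : Algebra.adjoin F (Set.range (algebraMap kbar Fbr)) = ⊤)
    (σ : Fbr →+* Fbr) (hσF : ∀ a : F, σ (algebraMap F Fbr a) = algebraMap F Fbr a)
    (hσk : ∀ c : kbar, σ (algebraMap kbar Fbr c) = algebraMap kbar Fbr c ^ Fintype.card k)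
    [AddCommGroup M] [Module Fbr M] [FiniteDimensional Fbr M]
    (Φ : M →+ M) (hΦ : ∀ (a : Fbr) (m : M), Φ (a • m) = σ a • Φ m) (v : M) :
    ∃ x, Φ x - x = v := by
  classical
  letI : Module F M := Module.compHom M (algebraMap F Fbr)
  haveI : IsScalarTower F Fbr M := ⟨fun a b m => by
    rw [Algebra.smul_def, mul_smul]; rfl⟩
  obtain ⟨p, hp⟩ := CharP.exists k
  haveI : Fact p.Prime := ⟨CharP.char_is_prime k p⟩
  haveI : CharP F p := charP_of_injective_algebraMap (algebraMap k F).injective p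
  let T : Module.End F M :=
    { toFun := Φ
      map_add' := Φ.map_add
      map_smul' := fun a m => by
        change Φ (algebraMap F Fbr a • m) = algebraMap F Fbr a • Φ m
        rw [hΦ, hσF] }
  have hT : ∀ m, T m = Φ m := fun _ => rfl
  -- finite subalgebras
  have hfin : ∀ S : Set Fbr, S.Finite → ∃ t : Set kbar, t.Finite ∧
      S ⊆ Algebra.adjoin F (algebraMap kbar Fbr '' t) := by
    intro S hS
    induction S, hS using Set.Finite.induction_on with
    | empty => exact ⟨∅, Set.finite_empty, Set.empty_subset _⟩
    | @insert a S _ _ ih =>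
      obtain ⟨t, ht, hSt⟩ := ih
      have ha : a ∈ Algebra.adjoin F (Set.range (algebraMap kbar Fbr)) := by rw [hgen]; trivial
      obtain ⟨t', ht', hat'⟩ : ∃ t' : Set kbar, t'.Finite ∧
          a ∈ Algebra.adjoin F (algebraMap kbar Fbr '' t') := by
        clear * - ha
        induction ha using Algebra.adjoin_induction with
        | mem x hx =>
          obtain ⟨c, rfl⟩ := hx
          exact ⟨{c}, Set.finite_singleton _, Algebra.subset_adjoin ⟨c, rfl, rfl⟩⟩
        | algebraMap r => exact ⟨∅, Set.finite_empty, Subalgebra.algebraMap_mem _ r⟩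
        | add x y _ _ h1 h2 =>
          obtain ⟨t1, h1, h1'⟩ := h1
          obtain ⟨t2, h2, h2'⟩ := h2
          exact ⟨t1 ∪ t2, h1.union h2, add_mem
            (Algebra.adjoin_mono (Set.image_mono Set.subset_union_left) h1')
            (Algebra.adjoin_mono (Set.image_mono Set.subset_union_right) h2')⟩
        | mul x y _ _ h1 h2 =>
          obtain ⟨t1, h1, h1'⟩ := h1
          obtain ⟨t2, h2, h2'⟩ := h2
          exact ⟨t1 ∪ t2, h1.union h2, mul_mem
            (Algebra.adjoin_mono (Set.image_mono Set.subset_union_left) h1')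
            (Algebra.adjoin_mono (Set.image_mono Set.subset_union_right) h2')⟩
      refine ⟨t ∪ t', ht.union ht', Set.insert_subset ?_ (hSt.trans ?_)⟩
      · exact Algebra.adjoin_mono (Set.image_mono Set.subset_union_right) hat'
      · exact Algebra.adjoin_mono (Set.image_mono Set.subset_union_left)
  let b := Module.finBasis Fbr M
  obtain ⟨t, ht, htS⟩ := hfin (Set.range (fun i => b.repr v i) ∪
    Set.range (fun ij : _ × _ => b.repr (Φ (b ij.1)) ij.2))
    ((Set.finite_range _).union (Set.finite_range _))
  set A := Algebra.adjoin F (algebraMap kbar Fbr '' t) with hA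
  have hAfg : (Subalgebra.toSubmodule A).FG := by
    refine fg_adjoin_of_finite (ht.image _) ?_
    rintro _ ⟨c, _, rfl⟩
    haveI := (IsAlgClosure.isAlgebraic : Algebra.IsAlgebraic k kbar)
    have : IsIntegral k (algebraMap kbar Fbr c) :=
      (Algebra.IsIntegral.isIntegral (R := k) c).algebraMap
    exact this.tower_top
  have hAσ : ∀ a ∈ A, σ a ∈ A := by
    intro a ha
    induction ha using Algebra.adjoin_induction with
    | mem x hx =>
      obtain ⟨c, hc, rfl⟩ := hx
      rw [hσk]
      exact pow_mem (Algebra.subset_adjoin (Set.mem_image_of_mem _ hc)) _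
    | algebraMap r => rw [hσF]; exact Subalgebra.algebraMap_mem _ r
    | add x y _ _ h1 h2 => rw [map_add]; exact add_mem h1 h2
    | mul x y _ _ h1 h2 => rw [map_mul]; exact mul_mem h1 h2
  let U : Submodule F M := ⨆ i, (Subalgebra.toSubmodule A).map
    ((LinearMap.toSpanSingleton Fbr M (b i)).restrictScalars F)
  have hUfg : U.FG := Submodule.fg_iSup _ fun i => hAfg.map _
  haveI : FiniteDimensional F U := Module.Finite.iff_fg.2 hUfg
  have hmem : ∀ a ∈ A, ∀ i, a • b i ∈ U := fun a ha i =>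
    Submodule.mem_iSup_of_mem i ⟨a, ha, rfl⟩
  have hmem' : ∀ m : M, (∀ i, b.repr m i ∈ A) → m ∈ U := by
    intro m hm
    rw [← b.sum_repr m]
    exact sum_mem fun i _ => hmem _ (hm i) i
  have hUΦ : ∀ u ∈ U, T u ∈ U := by
    have : U ≤ U.comap T := by
      refine iSup_le fun i => ?_
      rintro _ ⟨a, ha, rfl⟩
      change Φ (a • b i) ∈ U
      rw [hΦ]
      refine hmem' _ fun j => ?_
      rw [map_smul]
      exact mul_mem (hAσ a ha) (htS (Or.inr ⟨(i, j), rfl⟩))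
    exact this
  have hvU : v ∈ U := hmem' v fun i => htS (Or.inl ⟨i, rfl⟩)
  obtain ⟨y, u, r, hu, hv⟩ := isoSht_fitting p T U hUΦ v hvU
  -- solve `c ^ (q ^ n) - c = 1`
  haveI : IsAlgClosed kbar := IsAlgClosure.isAlgClosed k
  set n := p ^ r with hn
  have hn0 : n ≠ 0 := pow_ne_zero _ (Fact.out : p.Prime).ne_zero
  have hQ : 1 < Fintype.card k ^ n := Nat.one_lt_pow hn0 Fintype.one_lt_card
  obtain ⟨c, hc⟩ : ∃ c : kbar, c ^ (Fintype.card k ^ n) - c = 1 := by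
    have hd : (Polynomial.X ^ (Fintype.card k ^ n) - (Polynomial.X + Polynomial.C 1) :
        Polynomial kbar).degree = (Fintype.card k ^ n : ℕ) := by
      rw [Polynomial.degree_sub_eq_left_of_degree_lt, Polynomial.degree_X_pow]
      rw [Polynomial.degree_X_pow, Polynomial.degree_X_add_C]
      exact_mod_cast hQ
    obtain ⟨c, hc⟩ := IsAlgClosed.exists_root (k := kbar) (Polynomial.X ^ (Fintype.card k ^ n)
      - (Polynomial.X + Polynomial.C 1)) (by rw [hd]; exact_mod_cast (by omega))
    refine ⟨c, ?_⟩
    simp at hc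
    linear_combination hc
  have hiter : ∀ (j : ℕ) (m : M), (T ^ j) (algebraMap kbar Fbr c • m) =
      (algebraMap kbar Fbr c ^ (Fintype.card k ^ j)) • (T ^ j) m := by
    intro j m
    induction j with
    | zero => simp
    | succ j ih =>
      rw [pow_succ', Module.End.mul_apply, ih, Module.End.mul_apply, hT, hT, hΦ, map_pow, hσk,
        ← pow_mul, pow_succ']
  set z := algebraMap kbar Fbr c • u with hz
  have hz1 : (T ^ n) z - z = u := by
    rw [hz, hiter, hu, ← sub_smul, ← map_pow, ← map_sub, hc, map_one, one_smul]
  refine ⟨(∑ i ∈ Finset.range n, T ^ i) z + y, ?_⟩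
  have h2 : T ((∑ i ∈ Finset.range n, T ^ i) z) - (∑ i ∈ Finset.range n, T ^ i) z = u := by
    have := congrArg (fun f : Module.End F M => f z) (mul_geom_sum T n)
    simp only [Module.End.mul_apply, LinearMap.sub_apply, Module.End.one_apply] at this
    rw [this, hz1]
  rw [hv, ← h2, ← hT, map_add]
  abel


/-!
# Statement 0: Semisimplicity of the category of iso-Shtukas

Let `k = 𝔽_q` be a finite field, `k̄` an algebraic closure of `k`, `X` a geometrically
connected smooth projective curve over `k` with function field `F`, and `F̆ = F ⊗_k k̄`
(a field).  An iso-Shtuka over `F` is a pair `(V, φ)` with `V` a finite-dimensional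
`F̆`-vector space and `φ : V → V` an additive bijection which is `F`-linear and
`Frob_q`-semilinear over `k̄`.  The category `IsoSht(F)` is semisimple; equivalently,
every `φ`-stable `F̆`-subspace `W ⊆ V` admits a `φ`-stable complement.
-/

theorem isoShtuka_semisimple
    -- the finite base field `k = 𝔽_q`
    (k : Type) [Field k] [Fintype k]
    -- an algebraic closure `k̄` of `k`
    (kbar : Type) [Field kbar] [Algebra k kbar] [IsAlgClosure k kbar]
    -- the function field `F` of a geometrically connected smooth projective curve over `k`:
    -- `F` is a finite extension of `k(t)` …
    (F : Type) [Field F] [Algebra k F]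
    [Algebra (RatFunc k) F] [IsScalarTower k (RatFunc k) F]
    (hFF : FunctionField k F)
    -- … in which `k` is the exact field of constants (geometric connectedness)
    (hconst : ∀ a : F, IsAlgebraic k a → ∃ c : k, algebraMap k F c = a)
    -- the field `F̆ = F ⊗_k k̄`
    (Fbr : Type) [Field Fbr] [Algebra k Fbr] [Algebra F Fbr] [Algebra kbar Fbr]
    [IsScalarTower k F Fbr] [IsScalarTower k kbar Fbr]
    (htensor : Function.Bijective
      ⇑(Algebra.TensorProduct.productMap (IsScalarTower.toAlgHom k F Fbr)
        (IsScalarTower.toAlgHom k kbar Fbr)))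
    -- an iso-Shtuka `(V, φ)` over `F`
    (V : Type) [AddCommGroup V] [Module Fbr V] [FiniteDimensional Fbr V]
    (φ : V → V)
    (hbij : Function.Bijective φ)
    (hadd : ∀ v w : V, φ (v + w) = φ v + φ w)
    (hF : ∀ (a : F) (v : V), φ (algebraMap F Fbr a • v) = algebraMap F Fbr a • φ v)
    (hfrob : ∀ (c : kbar) (v : V),
      φ (algebraMap kbar Fbr c • v) = (algebraMap kbar Fbr c ^ Fintype.card k) • φ v)
    -- every `φ`-stable subspace …
    (W : Submodule Fbr V) (hW : φ '' (W : Set V) = (W : Set V)) :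
    -- … admits a `φ`-stable complement
    ∃ W' : Submodule Fbr V, φ '' (W' : Set V) = (W' : Set V) ∧ IsCompl W W' := by
  classical
  haveI := (IsAlgClosure.isAlgebraic : Algebra.IsAlgebraic k kbar)
  let e := AlgEquiv.ofBijective _ htensor
  let fr : kbar ≃ₐ[k] kbar := FiniteField.frobeniusAlgEquivOfAlgebraic k kbar
  let σ : Fbr ≃+* Fbr := ((e.symm.trans (Algebra.TensorProduct.congr AlgEquiv.refl fr)).trans
    e).toRingEquiv
  have heF : ∀ a : F, e (a ⊗ₜ[k] 1) = algebraMap F Fbr a := fun a => by simp [e]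
  have hek : ∀ c : kbar, e (1 ⊗ₜ[k] c) = algebraMap kbar Fbr c := fun a => by simp [e]
  have hσF : ∀ a : F, σ (algebraMap F Fbr a) = algebraMap F Fbr a := by
    intro a
    change e (Algebra.TensorProduct.congr AlgEquiv.refl fr (e.symm _)) = _
    rw [← heF, AlgEquiv.symm_apply_apply]
    simp
  have hσk : ∀ c : kbar, σ (algebraMap kbar Fbr c) = algebraMap kbar Fbr c ^ Fintype.card k := by
    intro a
    change e (Algebra.TensorProduct.congr AlgEquiv.refl fr (e.symm _)) = _
    rw [← hek, AlgEquiv.symm_apply_apply, ← map_pow]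
    simp [fr]
  have hgen : Algebra.adjoin F (Set.range (algebraMap kbar Fbr)) = ⊤ := by
    rw [eq_top_iff]
    rintro x -
    obtain ⟨x, rfl⟩ := e.surjective x
    induction x using TensorProduct.induction_on with
    | zero => rw [map_zero]; exact zero_mem _
    | add x y h1 h2 => rw [map_add]; exact add_mem h1 h2
    | tmul a c =>
      have : e (a ⊗ₜ[k] c) = algebraMap F Fbr a * algebraMap kbar Fbr c := by simp [e]
      rw [this]
      exact mul_mem (Subalgebra.algebraMap_mem _ _) (Algebra.subset_adjoin ⟨c, rfl⟩)
  have hsl : ∀ (x : Fbr) (v : V), φ (x • v) = σ x • φ v := by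
    intro x
    have hx : x ∈ Algebra.adjoin F (Set.range (algebraMap kbar Fbr)) := by rw [hgen]; trivial
    induction hx using Algebra.adjoin_induction with
    | mem x hx =>
      obtain ⟨c, rfl⟩ := hx
      intro v
      rw [hfrob, hσk]
    | algebraMap r => intro v; rw [hF, hσF]
    | add x y _ _ h1 h2 => intro v; rw [add_smul, hadd, h1, h2, map_add, add_smul]
    | mul x y _ _ h1 h2 => intro v; rw [mul_smul, h1, h2, map_mul, mul_smul]
  let φe : V ≃+ V := AddEquiv.mk' (Equiv.ofBijective φ hbij) hadd
  have hφe : ∀ v, φe v = φ v := fun _ => rfl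
  have hsl' : ∀ (x : Fbr) (v : V), φe.symm (x • v) = σ.symm x • φe.symm v := by
    intro x v
    apply φe.injective
    rw [AddEquiv.apply_symm_apply, hφe, hsl, RingEquiv.apply_symm_apply, ← hφe,
      AddEquiv.apply_symm_apply]
  have hW1 : ∀ w ∈ W, φe w ∈ W := fun w hw => by
    have : φ w ∈ φ '' (W : Set V) := ⟨w, hw, rfl⟩
    rw [hW] at this
    exact this
  have hW2 : ∀ w ∈ W, φe.symm w ∈ W := fun w hw => by
    have : w ∈ φ '' (W : Set V) := by rw [hW]; exact hw
    obtain ⟨w', hw', rfl⟩ := this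
    rw [← hφe, AddEquiv.symm_apply_apply]
    exact hw'
  let C : (V →ₗ[Fbr] V) →+ (V →ₗ[Fbr] V) :=
    { toFun := fun f =>
        { toFun := fun v => φe (f (φe.symm v))
          map_add' := fun v w => by simp
          map_smul' := fun a v => by
            rw [hsl', map_smul, hφe, hsl, RingEquiv.apply_symm_apply]; rfl }
      map_zero' := by ext v; simp
      map_add' := fun f g => by ext v; simp }
  have hC : ∀ f v, C f v = φe (f (φe.symm v)) := fun _ _ => rfl
  let M : Submodule Fbr (V →ₗ[Fbr] V) :=
    { carrier := {f | (∀ w ∈ W, f w = 0) ∧ ∀ v, f v ∈ W}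
      add_mem' := fun {f g} hf hg => ⟨fun w hw => by
        rw [LinearMap.add_apply, hf.1 w hw, hg.1 w hw, add_zero],
        fun v => add_mem (hf.2 v) (hg.2 v)⟩
      zero_mem' := ⟨fun _ _ => rfl, fun _ => zero_mem _⟩
      smul_mem' := fun a f hf => ⟨fun w hw => by
        rw [LinearMap.smul_apply, hf.1 w hw, smul_zero], fun v => W.smul_mem a (hf.2 v)⟩ }
  have hCM : ∀ f ∈ M, C f ∈ M := fun f hf => ⟨fun w hw => by
      rw [hC, hf.1 _ (hW2 w hw), map_zero], fun v => hW1 _ (hf.2 _)⟩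
  let Φ : M →+ M :=
    { toFun := fun f => ⟨C f, hCM f f.2⟩
      map_zero' := by ext1; simp
      map_add' := fun f g => by ext1; simp }
  have hΦ : ∀ (a : Fbr) (m : M), Φ (a • m) = (σ : Fbr →+* Fbr) a • Φ m := by
    intro a m
    ext v
    change φ (a • (m : V →ₗ[Fbr] V) (φe.symm v)) = σ a • φ ((m : V →ₗ[Fbr] V) (φe.symm v))
    exact hsl _ _
  obtain ⟨W₀, hW₀⟩ := W.exists_isCompl
  let π₀ : V →ₗ[Fbr] V := W.subtype ∘ₗ W.projectionOnto W₀ hW₀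
  have hπ1 : ∀ w ∈ W, π₀ w = w := fun w hw => by
    have := Submodule.projectionOnto_apply_left hW₀ ⟨w, hw⟩
    simp only [π₀, LinearMap.comp_apply]
    rw [this]; rfl
  have hπ2 : ∀ v, π₀ v ∈ W := fun v => (W.projectionOnto W₀ hW₀ v).2
  have hd : π₀ - C π₀ ∈ M := ⟨fun w hw => by
      rw [LinearMap.sub_apply, hC, hπ1 w hw, hπ1 _ (hW2 w hw), AddEquiv.apply_symm_apply, sub_self],
    fun v => sub_mem (hπ2 v) (hW1 _ (hπ2 _))⟩
  obtain ⟨h, hh⟩ := isoSht_surj k kbar F Fbr M hgen σ hσF hσk Φ hΦ ⟨_, hd⟩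
  have hh' : C (h : V →ₗ[Fbr] V) - (h : V →ₗ[Fbr] V) = π₀ - C π₀ := congrArg Subtype.val hh
  obtain ⟨h, hhM⟩ := h
  simp only at hh'
  let π := π₀ + h
  have hCπ : C π = π := by
    have : C π = C π₀ + C h := map_add _ _ _
    rw [this, eq_add_of_sub_eq hh']; simp only [π]; abel
  have hπ : ∀ v, π (φ v) = φ (π v) := fun v => by
    conv_lhs => rw [← hCπ, hC, ← hφe, AddEquiv.symm_apply_apply]
    rfl
  have hπw : ∀ w ∈ W, π w = w := fun w hw => by
    simp only [π, LinearMap.add_apply]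
    rw [hπ1 w hw, hhM.1 w hw, add_zero]
  have hπW : ∀ v, π v ∈ W := fun v => add_mem (hπ2 v) (hhM.2 v)
  refine ⟨LinearMap.ker π, ?_, ?_⟩
  · ext v
    constructor
    · rintro ⟨u, hu, rfl⟩
      change π (φ u) = 0
      rw [hπ, (hu : π u = 0)]
      exact φe.map_zero
    · intro hv
      obtain ⟨u, rfl⟩ := hbij.2 v
      refine ⟨u, ?_, rfl⟩
      have h0 : π (φ u) = 0 := hv
      rw [hπ] at h0
      exact hbij.1 (h0.trans φe.map_zero.symm)
  · refine IsCompl.of_eq ?_ ?_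
    · rw [Submodule.eq_bot_iff]
      rintro x ⟨hx1, hx2⟩
      rw [← hπw x hx1]
      exact hx2
    · rw [eq_top_iff]
      rintro x -
      refine Submodule.mem_sup.2 ⟨π x, hπW x, x - π x, ?_, by abel⟩
      change π (x - π x) = 0
      rw [map_sub, hπw _ (hπW x), sub_self]
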